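/- Let Ω ⊂ ℝⁿ be bounded open, Y^m = (0,1)^m with m > n, and R an m×n matrix satisfying R^T k ≠ 0 for all nonzero k ∈ ℤ^m. If a sequence (u_η) converges strongly to u in L^p(Ω), 1 < p < ∞, then (u_η) two-scale cut-and-projection converges weakly to the function u₀(x,y) = u(x) (independent of y). -/

import Mathlib

open MeasureTheory Filter Topology Matrix

noncomputable section

/-- The open unit cube `Y^m = (0,1)^m`. -/
def cube (m : ℕ) : Set (Fin m → ℝ) := Set.univ.pi fun _ => Set.Ioo (0:ℝ) 1

/-- `Y^m`-periodicity: invariance under integer translations. -/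
def Zper {m : ℕ} {α : Type*} (g : (Fin m → ℝ) → α) : Prop :=
  ∀ (k : Fin m → ℤ) (y : Fin m → ℝ), g (y + fun i => (k i : ℝ)) = g y

/-- Cut-and-projection irrationality condition: `Rᵀ k ≠ 0` for nonzero integer `k`. -/
def Irr {m n : ℕ} (R : Matrix (Fin m) (Fin n) ℝ) : Prop :=
  ∀ k : Fin m → ℤ, k ≠ 0 → R.transpose.mulVec (fun i => (k i : ℝ)) ≠ 0

/-- Admissible test functions: `φ ∈ L^q(Ω; C_♯(Y^m))`. -/
def TestFun {n m : ℕ} (q : ℝ) (Ω : Set (Fin n → ℝ))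
    (φ : (Fin n → ℝ) → (Fin m → ℝ) → ℝ) : Prop :=
  (∀ x, Continuous (φ x)) ∧ (∀ x, Zper (φ x)) ∧
  (∀ y, AEMeasurable (fun x => φ x y) (volume.restrict Ω)) ∧
  Integrable (fun x => (⨆ y, |φ x y|) ^ q) (volume.restrict Ω)

/-- Weak two-scale cut-and-projection convergence along a sequence of scales `η`. -/
def WeakTwoScale {n m : ℕ} (q : ℝ) (Ω : Set (Fin n → ℝ)) (R : Matrix (Fin m) (Fin n) ℝ)
    (η : ℕ → ℝ) (u : ℕ → (Fin n → ℝ) → ℝ)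
    (u₀ : (Fin n → ℝ) → (Fin m → ℝ) → ℝ) : Prop :=
  ∀ φ : (Fin n → ℝ) → (Fin m → ℝ) → ℝ, TestFun q Ω φ →
    Tendsto (fun k => ∫ x in Ω, u k x * φ x ((η k)⁻¹ • R.mulVec x)) atTop
      (𝓝 (∫ x in Ω, ∫ y in cube m, u₀ x y * φ x y))

/-- Classical gradient on `ℝ^m`. -/
def gradY {m : ℕ} (θ : (Fin m → ℝ) → ℝ) (y : Fin m → ℝ) : Fin m → ℝ :=
  fun j => fderiv ℝ θ y (Pi.single j 1)

/-- The projected gradient `grad_R θ = Rᵀ ∇_y θ`. -/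
def gradR {m n : ℕ} (R : Matrix (Fin m) (Fin n) ℝ) (θ : (Fin m → ℝ) → ℝ)
    (y : Fin m → ℝ) : Fin n → ℝ :=
  R.transpose.mulVec (gradY θ y)

/-- The projected divergence `div_R φ = (Rᵀ ∇_y) · φ`. -/
def divR {m n : ℕ} (R : Matrix (Fin m) (Fin n) ℝ) (φ : (Fin m → ℝ) → Fin n → ℝ)
    (y : Fin m → ℝ) : ℝ :=
  ∑ i, gradR R (fun z => φ z i) y i

/-- `G` is the weak periodic cut-and-projection gradient `grad_R θ`. -/
def IsWeakGradR {m n : ℕ} (R : Matrix (Fin m) (Fin n) ℝ) (θ : (Fin m → ℝ) → ℝ)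
    (G : (Fin m → ℝ) → Fin n → ℝ) : Prop :=
  ∀ ψ : (Fin m → ℝ) → Fin n → ℝ, ContDiff ℝ (⊤ : ℕ∞) ψ → (∀ i, Zper fun y => ψ y i) →
    ∫ y in cube m, θ y * divR R ψ y = - ∫ y in cube m, G y ⬝ᵥ ψ y

/-- `d` is the weak periodic cut-and-projection divergence `div_R φ`. -/
def IsWeakDivR {m n : ℕ} (R : Matrix (Fin m) (Fin n) ℝ) (φ : (Fin m → ℝ) → Fin n → ℝ)
    (d : (Fin m → ℝ) → ℝ) : Prop :=
  ∀ ψ : (Fin m → ℝ) → ℝ, ContDiff ℝ (⊤ : ℕ∞) ψ → Zper ψ →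
    ∫ y in cube m, φ y ⬝ᵥ gradR R ψ y = - ∫ y in cube m, d y * ψ y

/-- `G` is the weak (full) periodic gradient `∇_y θ`. -/
def IsWeakGrad {m : ℕ} (θ : (Fin m → ℝ) → ℝ) (G : (Fin m → ℝ) → Fin m → ℝ) : Prop :=
  ∀ ψ : (Fin m → ℝ) → ℝ, ContDiff ℝ (⊤ : ℕ∞) ψ → Zper ψ → ∀ j,
    ∫ y in cube m, θ y * gradY ψ y j = - ∫ y in cube m, G y j * ψ y

/-- `G` is the weak gradient of `u` on `Ω`. -/
def IsWeakGradOn {n : ℕ} (Ω : Set (Fin n → ℝ)) (u : (Fin n → ℝ) → ℝ)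
    (G : (Fin n → ℝ) → Fin n → ℝ) : Prop :=
  ∀ ψ : (Fin n → ℝ) → ℝ, ContDiff ℝ (⊤ : ℕ∞) ψ → HasCompactSupport ψ → tsupport ψ ⊆ Ω → ∀ j,
    ∫ x in Ω, u x * fderiv ℝ ψ x (Pi.single j 1) = - ∫ x in Ω, G x j * ψ x

/-- `d` is the weak divergence of `v` on `Ω`. -/
def IsWeakDivOn {n : ℕ} (Ω : Set (Fin n → ℝ)) (v : (Fin n → ℝ) → Fin n → ℝ)
    (d : (Fin n → ℝ) → ℝ) : Prop :=
  ∀ ψ : (Fin n → ℝ) → ℝ, ContDiff ℝ (⊤ : ℕ∞) ψ → HasCompactSupport ψ → tsupport ψ ⊆ Ω →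
    ∫ x in Ω, v x ⬝ᵥ (fun j => fderiv ℝ ψ x (Pi.single j 1)) = - ∫ x in Ω, d x * ψ x

/-- Membership in `W_0^{1,p}(Ω)` with weak gradient `G`. -/
def MemW1p0 {n : ℕ} (p : ℝ) (Ω : Set (Fin n → ℝ)) (u : (Fin n → ℝ) → ℝ)
    (G : (Fin n → ℝ) → Fin n → ℝ) : Prop :=
  Integrable (fun x => |u x| ^ p) (volume.restrict Ω) ∧
  Integrable (fun x => ‖G x‖ ^ p) (volume.restrict Ω) ∧
  IsWeakGradOn Ω u G ∧
  ∃ v : ℕ → (Fin n → ℝ) → ℝ,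
    (∀ j, ContDiff ℝ (⊤ : ℕ∞) (v j) ∧ HasCompactSupport (v j) ∧ tsupport (v j) ⊆ Ω) ∧
    Tendsto (fun j => (∫ x in Ω, |v j x - u x| ^ p) +
      ∫ x in Ω, ‖(fun i => fderiv ℝ (v j) x (Pi.single i 1)) - G x‖ ^ p) atTop (𝓝 0)


/-- projection to the torus -/
def toT {m : ℕ} (y : Fin m → ℝ) : UnitAddTorus (Fin m) := fun i => (y i : UnitAddCircle)

lemma continuous_toT {m : ℕ} : Continuous (toT (m := m)) := by
  unfold toT
  exact continuous_pi fun i => (AddCircle.continuous_mk' 1).comp (continuous_apply i)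

lemma isQuot_toT {m : ℕ} : IsQuotientMap (toT (m := m)) := by
  have h1 : IsOpenMap (toT (m := m)) := by
    have := IsOpenMap.piMap (f := fun (_ : Fin m) (y : ℝ) => (y : UnitAddCircle))
      (fun i => QuotientAddGroup.isOpenMap_coe)
      (Eventually.of_forall fun i => QuotientAddGroup.mk_surjective)
    exact this
  refine h1.isQuotientMap continuous_toT ?_
  intro t
  choose g hg using fun i => QuotientAddGroup.mk_surjective (t i)
  exact ⟨g, funext hg⟩

lemma toT_eq {m : ℕ} {y z : Fin m → ℝ} (h : toT y = toT z) :
    ∃ k : Fin m → ℤ, y = z + fun i => (k i : ℝ) := by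
  have : ∀ i, ∃ k : ℤ, y i = z i + k := by
    intro i
    have := congrFun h i
    simp only [toT] at this
    rw [eq_comm, QuotientAddGroup.eq, AddSubgroup.mem_zmultiples_iff] at this
    obtain ⟨k, hk⟩ := this
    refine ⟨k, ?_⟩
    simp at hk
    linarith
  choose k hk using this
  exact ⟨k, funext hk⟩

/-- periodic functions descend to the torus -/
lemma exists_desc {m : ℕ} (g : (Fin m → ℝ) → ℝ) (hg : Continuous g) (hp : Zper g) :
    ∃ G : C(UnitAddTorus (Fin m), ℂ), ∀ y, G (toT y) = (g y : ℂ) := by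
  have hs := (isQuot_toT (m := m)).surjective
  have key : ∀ y, g (Function.surjInv hs (toT y)) = g y := by
    intro y
    obtain ⟨k, hk⟩ := toT_eq (Function.surjInv_eq hs (toT y))
    rw [hk, hp]
  refine ⟨⟨fun t => (g (Function.surjInv hs t) : ℂ), ?_⟩, fun y => congrArg Complex.ofReal (key y)⟩
  rw [isQuot_toT.continuous_iff]
  have : (fun t => (g (Function.surjInv hs t) : ℂ)) ∘ toT = fun y => (g y : ℂ) := by
    funext y; exact congrArg Complex.ofReal (key y)
  rw [this]
  fun_prop

instance {m : ℕ} : IsProbabilityMeasure (volume.restrict (cube m)) := by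
  constructor
  simp [cube, Real.volume_pi_Ioo]

lemma integrable_toT {m : ℕ} (f : C(UnitAddTorus (Fin m), ℂ)) :
    Integrable (fun y => f (toT y)) (volume.restrict (cube m)) := by
  refine Integrable.of_bound (C := ‖f‖)
    (f.continuous.comp continuous_toT).aestronglyMeasurable ?_
  exact Eventually.of_forall fun y => f.norm_coe_le_norm _

/-- mean functional -/
def meanT (m : ℕ) : C(UnitAddTorus (Fin m), ℂ) →L[ℂ] ℂ :=
  LinearMap.mkContinuous
    { toFun := fun f => ∫ y in cube m, f (toT y)
      map_add' := fun f g => by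
        simpa using integral_add (integrable_toT f) (integrable_toT g)
      map_smul' := fun c f => by
        simpa using integral_const_mul c (fun y => f (toT y)) } 1 (by
    intro f
    have := norm_integral_le_of_norm_le_const (μ := volume.restrict (cube m))
      (f := fun y => f (toT y)) (C := ‖f‖) (Eventually.of_forall fun y => f.norm_coe_le_norm _)
    simpa using this)

lemma meanT_apply {m : ℕ} (f : C(UnitAddTorus (Fin m), ℂ)) :
    meanT m f = ∫ y in cube m, f (toT y) := rfl

lemma mFourier_toT {m : ℕ} (k : Fin m → ℤ) (y : Fin m → ℝ) :
    UnitAddTorus.mFourier k (toT y) = Real.fourierChar ((fun i => (k i : ℝ)) ⬝ᵥ y) := by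
  simp only [UnitAddTorus.mFourier, toT, ContinuousMap.coe_mk, fourier_coe_apply,
    Real.fourierChar_apply, ← Complex.exp_sum]
  congr 1
  simp only [dotProduct, Complex.ofReal_mul, Complex.ofReal_sum, Finset.mul_sum, Finset.sum_mul,
    Complex.ofReal_intCast, Complex.ofReal_one, div_one, Complex.ofReal_ofNat]
  refine Finset.sum_congr rfl fun i _ => by ring

lemma meanT_mFourier {m : ℕ} (k : Fin m → ℤ) (hk : k ≠ 0) :
    meanT m (UnitAddTorus.mFourier k) = 0 := by
  rw [meanT_apply]
  obtain ⟨i, hi⟩ := Function.ne_iff.mp hk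
  simp only [UnitAddTorus.mFourier, ContinuousMap.coe_mk, toT, cube, volume_pi,
    Measure.restrict_pi_pi]
  rw [integral_fintype_prod_eq_prod (f := fun i (y : ℝ) => fourier (k i) (y : UnitAddCircle))]
  apply Finset.prod_eq_zero (Finset.mem_univ i)
  rw [← integral_Ioc_eq_integral_Ioo, ← intervalIntegral.integral_of_le zero_le_one]
  simp only [fourier_coe_apply]
  have hne : (2 * Real.pi * Complex.I * (k i : ℂ)) ≠ 0 := by
    have : (k i : ℂ) ≠ 0 := by exact_mod_cast hi
    simp [Real.pi_ne_zero, this]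
  have := integral_exp_mul_complex (a := 0) (b := 1) hne
  simp only [Complex.ofReal_one, div_one]
  rw [this]
  have h2 : Complex.exp (2 * Real.pi * Complex.I * (k i : ℂ)) = 1 := by
    rw [mul_comm]; exact Complex.exp_int_mul_two_pi_mul_I _
  simp [h2]

lemma rl_char {n m : ℕ} (R : Matrix (Fin m) (Fin n) ℝ) (hR : Irr R)
    (η : ℕ → ℝ) (hηpos : ∀ k, 0 < η k) (hη : Tendsto η atTop (𝓝 0))
    (μ : Measure (Fin n → ℝ)) (Ω : Set (Fin n → ℝ)) (hμ : μ = volume.restrict Ω)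
    (s : Set (Fin n → ℝ)) (hs : MeasurableSet s) (k : Fin m → ℤ) (hk : k ≠ 0)
    (hΩ : MeasurableSet Ω) :
    Tendsto (fun j => ∫ x in s, UnitAddTorus.mFourier k (toT ((η j)⁻¹ • R.mulVec x)) ∂μ)
      atTop (𝓝 0) := by
  subst hμ
  rw [Measure.restrict_restrict hs]
  let L0 : (Fin n → ℝ) →ₗ[ℝ] ℝ :=
    { toFun := fun x => (fun i => (k i : ℝ)) ⬝ᵥ R.mulVec x
      map_add' := fun x y => by simp [Matrix.mulVec_add, dotProduct_add]
      map_smul' := fun c x => by simp [Matrix.mulVec_smul, dotProduct_smul] }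
  let L : StrongDual ℝ (Fin n → ℝ) := LinearMap.toContinuousLinearMap L0
  have hL : ∀ x, L x = (fun i => (k i : ℝ)) ⬝ᵥ R.mulVec x := fun x => rfl
  have hL0 : L ≠ 0 := by
    intro h
    apply hR k hk
    apply dotProduct_self_eq_zero.mp
    have := hL (R.transpose.mulVec fun i => (k i : ℝ))
    rw [h, Matrix.dotProduct_mulVec, ← Matrix.mulVec_transpose] at this
    simpa using this.symm
  have hT : Tendsto (fun j => -((η j)⁻¹ • L)) atTop (cocompact (StrongDual ℝ (Fin n → ℝ))) := by
    rw [← Metric.cobounded_eq_cocompact, ← tendsto_norm_atTop_iff_cobounded]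
    simp only [norm_neg, norm_smul]
    refine Tendsto.atTop_mul_const (norm_pos_iff.mpr hL0) ?_
    refine tendsto_norm_atTop_atTop.comp (f := fun j => (η j)⁻¹) (Tendsto.inv_tendsto_nhdsGT_zero ?_)
    exact tendsto_nhdsWithin_iff.mpr ⟨hη, Eventually.of_forall hηpos⟩
  have := (tendsto_integral_exp_smul_cocompact ((s ∩ Ω).indicator (fun _ => (1:ℂ)))
    (volume : Measure (Fin n → ℝ))).comp hT
  refine this.congr fun j => ?_
  simp only [Function.comp]
  rw [← integral_indicator (hs.inter hΩ)]
  congr 1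
  funext x
  by_cases hx : x ∈ s ∩ Ω
  · simp only [Set.indicator_of_mem hx, mFourier_toT]
    simp [hL, dotProduct_smul, Circle.smul_def]
  · simp [Set.indicator_of_notMem hx]

lemma aesm_of_eval {X : Type*} [MeasurableSpace X] {μ : Measure X} {m : ℕ}
    (F : X → C(UnitAddTorus (Fin m), ℂ)) (hF : ∀ t, AEMeasurable (fun x => F x t) μ) :
    AEStronglyMeasurable F μ := by
  borelize C(UnitAddTorus (Fin m), ℂ)
  let e : C(UnitAddTorus (Fin m), ℂ) → (ℕ → ℂ) :=
    fun f i => f (TopologicalSpace.denseSeq (UnitAddTorus (Fin m)) i)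
  have hec : Continuous e := continuous_pi fun i => continuous_eval_const _
  have hei : Function.Injective e := by
    intro f g h
    apply DFunLike.coe_injective
    refine (TopologicalSpace.denseRange_denseSeq _).equalizer f.continuous g.continuous ?_
    funext i
    exact congrFun h i
  have hme : MeasurableEmbedding e := hec.measurableEmbedding hei
  have : AEMeasurable F μ := by
    rw [← hme.aemeasurable_comp_iff, aemeasurable_pi_iff]
    exact fun i => hF _
  exact this.aestronglyMeasurable

lemma aesm_comp {X : Type*} [MeasurableSpace X] {μ : Measure X} {m : ℕ}
    (F : X → C(UnitAddTorus (Fin m), ℂ)) (hF : AEStronglyMeasurable F μ)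
    (a : X → UnitAddTorus (Fin m)) (ha : AEStronglyMeasurable a μ) :
    AEStronglyMeasurable (fun x => F x (a x)) μ :=
  (continuous_eval (F := C(UnitAddTorus (Fin m), ℂ))).comp_aestronglyMeasurable (hF.prodMk ha)

lemma integrable_comp {X : Type*} [MeasurableSpace X] {μ : Measure X} {m : ℕ}
    (F : X → C(UnitAddTorus (Fin m), ℂ)) (hF : Integrable F μ)
    (a : X → UnitAddTorus (Fin m)) (ha : AEStronglyMeasurable a μ) :
    Integrable (fun x => F x (a x)) μ :=
  hF.mono (aesm_comp F hF.1 a ha) (Eventually.of_forall fun x => (F x).norm_coe_le_norm _)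

lemma tendsto_set {X : Type*} [MeasurableSpace X] {μ : Measure X} {m : ℕ}
    (a : ℕ → X → UnitAddTorus (Fin m)) (ha : ∀ j, AEStronglyMeasurable (a j) μ)
    (s : Set X) (hμs : μ s < ⊤)
    (h : ∀ k : Fin m → ℤ, k ≠ 0 →
      Tendsto (fun j => ∫ x in s, UnitAddTorus.mFourier k (a j x) ∂μ) atTop (𝓝 0))
    (c : C(UnitAddTorus (Fin m), ℂ)) :
    Tendsto (fun j => ∫ x in s, c (a j x) ∂μ) atTop (𝓝 (μ.real s * meanT m c)) := by
  have : IsFiniteMeasure (μ.restrict s) := ⟨by simpa using hμs⟩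
  have hint : ∀ (c : C(UnitAddTorus (Fin m), ℂ)) j,
      Integrable (fun x => c (a j x)) (μ.restrict s) := fun c j =>
    integrable_comp (fun _ => c) (integrable_const c) (a j) (ha j).restrict
  have hclosed : IsClosed {c : C(UnitAddTorus (Fin m), ℂ) |
      Tendsto (fun j => ∫ x in s, c (a j x) ∂μ) atTop (𝓝 (μ.real s * meanT m c))} := by
    refine Equicontinuous.isClosed_setOfPred_tendsto
      (F := fun j (c : C(UnitAddTorus (Fin m), ℂ)) => ∫ x in s, c (a j x) ∂μ)
      (f := fun c => μ.real s * meanT m c) ?_ (by fun_prop)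
    refine Metric.equicontinuous_of_continuity_modulus (fun t => t * μ.real s) ?_ _ ?_
    · exact Continuous.tendsto' (by fun_prop) _ _ (by simp)
    · intro f g j
      rw [dist_eq_norm, ← integral_sub (hint f j) (hint g j), dist_eq_norm]
      have := norm_integral_le_of_norm_le_const (μ := μ.restrict s)
        (f := fun x => f (a j x) - g (a j x)) (C := ‖f - g‖)
        (Eventually.of_forall fun x => (f - g).norm_coe_le_norm (a j x))
      simpa using this
  have hspan : (Submodule.span ℂ (Set.range (UnitAddTorus.mFourier (d := Fin m))) :
      Set C(UnitAddTorus (Fin m), ℂ)) ⊆ {c : C(UnitAddTorus (Fin m), ℂ) |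
      Tendsto (fun j => ∫ x in s, c (a j x) ∂μ) atTop (𝓝 (μ.real s * meanT m c))} := by
    intro c hc
    induction hc using Submodule.span_induction with
    | mem x hx =>
      obtain ⟨k, rfl⟩ := hx
      by_cases hk : k = 0
      · subst hk
        simp [UnitAddTorus.mFourier_zero, meanT_apply]
      · simpa [meanT_mFourier k hk] using h k hk
    | zero => simp
    | add f g _ _ hf hg =>
      have := Tendsto.add hf hg
      simp only [Set.mem_ofPred_eq, map_add, mul_add]
      refine this.congr fun j => ?_
      exact (integral_add (hint f j) (hint g j)).symm
    | smul r f _ hf =>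
      have := Tendsto.const_mul r hf
      simp only [Set.mem_ofPred_eq, map_smul]
      rw [smul_eq_mul, mul_left_comm]
      refine this.congr fun j => ?_
      exact (integral_const_mul r _).symm
  have hcl := hclosed.closure_subset_iff.mpr hspan
  have htop := UnitAddTorus.span_mFourier_closure_eq_top (d := Fin m)
  have hc : c ∈ (Submodule.span ℂ
    (Set.range (UnitAddTorus.mFourier (d := Fin m)))).topologicalClosure := by
    rw [htop]; trivial
  exact hcl hc

lemma tendsto_gen {X : Type*} [MeasurableSpace X] {μ : Measure X} {m : ℕ}
    (a : ℕ → X → UnitAddTorus (Fin m)) (ha : ∀ j, AEStronglyMeasurable (a j) μ)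
    (h : ∀ (s : Set X), MeasurableSet s → ∀ k : Fin m → ℤ, k ≠ 0 →
      Tendsto (fun j => ∫ x in s, UnitAddTorus.mFourier k (a j x) ∂μ) atTop (𝓝 0))
    (Ψ : X → C(UnitAddTorus (Fin m), ℂ)) (hΨ : Integrable Ψ μ) :
    Tendsto (fun j => ∫ x, Ψ x (a j x) ∂μ) atTop (𝓝 (∫ x, meanT m (Ψ x) ∂μ)) := by
  refine Integrable.induction (μ := μ) (fun (Ψ : X → C(UnitAddTorus (Fin m), ℂ)) =>
    Tendsto (fun j => ∫ x, Ψ x (a j x) ∂μ) atTop (𝓝 (∫ x, meanT m (Ψ x) ∂μ)))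
    ?_ ?_ ?_ ?_ hΨ
  · intro c s hs hμs
    have := tendsto_set a ha s hμs (h s hs) c
    have e1 : ∀ j, ∫ x, (s.indicator (fun _ => c) x) (a j x) ∂μ = ∫ x in s, c (a j x) ∂μ := by
      intro j
      rw [← integral_indicator hs]
      congr 1
      funext x
      by_cases hx : x ∈ s <;> simp [hx]
    have e2 : ∫ x, meanT m (s.indicator (fun _ => c) x) ∂μ = μ.real s * meanT m c := by
      have : ∀ x, meanT m (s.indicator (fun _ => c) x) =
          s.indicator (fun _ => meanT m c) x := by
        intro x
        by_cases hx : x ∈ s <;> simp [hx]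
      simp only [this]
      rw [integral_indicator hs]
      simp
    simp only [e1, e2]
    exact this
  · intro f g _ hf hg h1 h2
    have := h1.add h2
    have e2 : ∫ x, meanT m ((f + g) x) ∂μ = ∫ x, meanT m (f x) ∂μ + ∫ x, meanT m (g x) ∂μ := by
      rw [← integral_add ((meanT m).integrable_comp hf) ((meanT m).integrable_comp hg)]
      simp
    rw [e2]
    refine this.congr fun j => ?_
    exact (integral_add (integrable_comp f hf _ (ha j)) (integrable_comp g hg _ (ha j))).symm
  · refine Equicontinuous.isClosed_setOfPred_tendsto
      (F := fun j (f : X →₁[μ] C(UnitAddTorus (Fin m), ℂ)) => ∫ x, f x (a j x) ∂μ)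
      (f := fun f => ∫ x, meanT m (f x) ∂μ) ?_ ?_
    · refine Metric.equicontinuous_of_continuity_modulus (fun t => t) tendsto_id _ ?_
      intro f g j
      have hf := L1.integrable_coeFn f
      have hg := L1.integrable_coeFn g
      rw [dist_eq_norm, ← integral_sub (integrable_comp f hf _ (ha j))
        (integrable_comp g hg _ (ha j)), dist_eq_norm, L1.norm_eq_integral_norm]
      refine norm_integral_le_of_norm_le (L1.integrable_coeFn (f - g)).norm ?_
      filter_upwards [Lp.coeFn_sub f g] with x hx
      rw [hx]
      exact (f x - g x).norm_coe_le_norm (a j x)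
    · have : (fun f : X →₁[μ] C(UnitAddTorus (Fin m), ℂ) => ∫ x, meanT m (f x) ∂μ) =
          fun f => meanT m (∫ x, f x ∂μ) := by
        funext f
        exact (meanT m).integral_comp_comm (L1.integrable_coeFn f)
      rw [this]
      exact (meanT m).continuous.comp continuous_integral
  · intro f g hfg _ hf
    have e2 : ∫ x, meanT m (g x) ∂μ = ∫ x, meanT m (f x) ∂μ :=
      integral_congr_ae (hfg.mono fun x hx => by simp [hx])
    rw [e2]
    refine hf.congr fun j => ?_
    exact integral_congr_ae (hfg.mono fun x hx => by simp [hx])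

/-- if `u_η → u` strongly in `L^p(Ω)` then `u_η` two-scale
cut-and-projection converges weakly to `u₀(x,y) = u(x)`. -/
theorem stmt3 {n m : ℕ} (hnm : n < m) (p q : ℝ) (hp : 1 < p) (hpq : 1 / p + 1 / q = 1)
    (Ω : Set (Fin n → ℝ)) (hΩo : IsOpen Ω) (hΩb : Bornology.IsBounded Ω)
    (R : Matrix (Fin m) (Fin n) ℝ) (hR : Irr R)
    (η : ℕ → ℝ) (hηpos : ∀ k, 0 < η k) (hη : Tendsto η atTop (𝓝 0))
    (u : ℕ → (Fin n → ℝ) → ℝ) (v : (Fin n → ℝ) → ℝ)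
    (hu : ∀ k, AEMeasurable (u k) (volume.restrict Ω))
    (huLp : ∀ k, Integrable (fun x => |u k x| ^ p) (volume.restrict Ω))
    (hv : AEMeasurable v (volume.restrict Ω))
    (hvLp : Integrable (fun x => |v x| ^ p) (volume.restrict Ω))
    (hstrong : Tendsto (fun k => ∫ x in Ω, |u k x - v x| ^ p) atTop (𝓝 0)) :
    WeakTwoScale q Ω R η u (fun x _ => v x) := by
  have hpq' : p.HolderConjugate q := by
    rw [Real.holderConjugate_iff]
    exact ⟨hp, by simpa [one_div] using hpq⟩
  have hp0 : 0 < p := hpq'.pos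
  have hq0 : 0 < q := hpq'.symm.pos
  intro φ hφ
  obtain ⟨hc, hper, hmeas, hint⟩ := hφ
  choose Φ hΦ using fun x => exists_desc (φ x) (hc x) (hper x)
  set μ : Measure (Fin n → ℝ) := volume.restrict Ω with hμ
  have hΦm : AEStronglyMeasurable Φ μ := by
    apply aesm_of_eval
    intro t
    obtain ⟨y, rfl⟩ := isQuot_toT.surjective t
    simp only [hΦ]
    exact Complex.measurable_ofReal.comp_aemeasurable (hmeas y)
  have hnorm : ∀ x, ‖Φ x‖ = ⨆ y, |φ x y| := by
    intro x
    rw [ContinuousMap.norm_eq_iSup_norm]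
    rw [← isQuot_toT.surjective.iSup_comp]
    simp [hΦ]
  have hle : ∀ x y, |φ x y| ≤ ‖Φ x‖ := by
    intro x y
    have := (Φ x).norm_coe_le_norm (toT y)
    simpa [hΦ] using this
  have hΦq : Integrable (fun x => ‖Φ x‖ ^ q) μ := by simpa only [hnorm] using hint
  have memp : ∀ f : (Fin n → ℝ) → ℝ, AEMeasurable f μ → Integrable (fun x => |f x| ^ p) μ →
      MemLp f (ENNReal.ofReal p) μ := by
    intro f hf hi
    rw [← integrable_norm_rpow_iff hf.aestronglyMeasurable (by simpa using hp0) (by simp),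
      ENNReal.toReal_ofReal hp0.le]
    exact hi
  have hΦL : MemLp Φ (ENNReal.ofReal q) μ := by
    rw [← integrable_norm_rpow_iff hΦm (by simpa using hq0) (by simp),
      ENNReal.toReal_ofReal hq0.le]
    exact hΦq
  have : (ENNReal.ofReal p).HolderConjugate (ENNReal.ofReal q) := hpq'.ennrealOfReal
  have hprod : ∀ f : (Fin n → ℝ) → ℝ, MemLp f (ENNReal.ofReal p) μ →
      Integrable (fun x => (f x : ℂ) • Φ x) μ := by
    intro f hf
    rw [← memLp_one_iff_integrable]
    exact MemLp.smul (p := ENNReal.ofReal p) (q := ENNReal.ofReal q) hΦL (hf.ofReal (K := ℂ))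
  let a : ℕ → (Fin n → ℝ) → UnitAddTorus (Fin m) := fun j x => toT ((η j)⁻¹ • R.mulVec x)
  have ha : ∀ j, AEStronglyMeasurable (a j) μ := by
    intro j
    refine Continuous.aestronglyMeasurable (continuous_toT.comp ?_)
    have : Continuous fun x : Fin n → ℝ => R.mulVec x :=
      Continuous.matrix_mulVec continuous_const continuous_id
    fun_prop
  have hreal : ∀ f : (Fin n → ℝ) → ℝ, MemLp f (ENNReal.ofReal p) μ → ∀ j,
      Integrable (fun x => f x * φ x ((η j)⁻¹ • R.mulVec x)) μ := by
    intro f hf j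
    have := (integrable_comp _ (hprod f hf) (a j) (ha j)).re
    simpa [a, hΦ] using this
  have hvL := memp v hv hvLp
  have hmain := tendsto_gen a ha (fun s hs k hk =>
    rl_char R hR η hηpos hη μ Ω hμ s hs k hk hΩo.measurableSet) _ (hprod v hvL)
  have hvconv : Tendsto (fun k => ∫ x, v x * φ x ((η k)⁻¹ • R.mulVec x) ∂μ) atTop
      (𝓝 (∫ x, (∫ y in cube m, v x * φ x y) ∂μ)) := by
    have := (Complex.continuous_re.tendsto _).comp hmain
    have e1 : ∀ x, meanT m ((v x : ℂ) • Φ x) = ((∫ y in cube m, v x * φ x y : ℝ) : ℂ) := by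
      intro x
      rw [meanT_apply, ← integral_complex_ofReal]
      simp [hΦ]
    simp only [e1, integral_complex_ofReal, Complex.ofReal_re] at this
    refine this.congr fun j => ?_
    have e2 : ∀ x, ((v x : ℂ) • Φ x) (a j x) =
        ((v x * φ x ((η j)⁻¹ • R.mulVec x) : ℝ) : ℂ) := by
      intro x; simp [a, hΦ]
    simp only [Function.comp, e2, integral_complex_ofReal, Complex.ofReal_re]
  have hdiff : Tendsto (fun k => ∫ x, (u k x - v x) * φ x ((η k)⁻¹ • R.mulVec x) ∂μ) atTop
      (𝓝 0) := by
    have hb : Tendsto (fun k => (∫ x in Ω, |u k x - v x| ^ p) ^ (1 / p) *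
        (∫ x, ‖Φ x‖ ^ q ∂μ) ^ (1 / q)) atTop (𝓝 0) := by
      have h1 := (hstrong.rpow_const (p := 1 / p) (Or.inr (by positivity))).mul_const
        ((∫ x, ‖Φ x‖ ^ q ∂μ) ^ (1 / q))
      rwa [Real.zero_rpow (by positivity), zero_mul] at h1
    refine squeeze_zero_norm (fun k => ?_) hb
    have hw : MemLp (fun x => u k x - v x) (ENNReal.ofReal p) μ :=
      (memp _ (hu k) (huLp k)).sub hvL
    have hH := integral_mul_le_Lp_mul_Lq_of_nonneg (μ := μ) hpq'
      (f := fun x => |u k x - v x|) (g := fun x => ‖Φ x‖)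
      (Eventually.of_forall fun x => abs_nonneg _) (Eventually.of_forall fun x => norm_nonneg _)
      hw.norm hΦL.norm
    refine le_trans (norm_integral_le_of_norm_le ?_ (Eventually.of_forall fun x => ?_)) hH
    · have := (hprod _ hw).norm
      simpa only [norm_smul, Complex.norm_real, Real.norm_eq_abs] using this
    · rw [norm_mul]
      exact mul_le_mul_of_nonneg_left (hle x _) (abs_nonneg _)
  have hsum := hdiff.add hvconv
  rw [zero_add] at hsum
  refine hsum.congr fun k => ?_
  rw [← integral_add]
  · congr 1
    funext x
    ring
  · exact hreal _ ((memp _ (hu k) (huLp k)).sub hvL) k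
  · exact hreal _ hvL k
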